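/- Let γ be an ordinal closed under ordinal addition which is not a cardinal, and let α < γ be an ordinal. Then θ_γ is order isomorphic to θ_γ × (α + 1). -/

import Mathlib

/-- The carrier of the linear order `θ_γ`: finite sequences of ordinals `< γ`. -/
def ThetaCarrier (γ : Ordinal) : Type _ := {l : List Ordinal // ∀ o ∈ l, o < γ}

/-- The strict order of `θ_γ` on underlying lists: `x < y` iff `y` is a proper initial
segment of `x`, or there is `n < min (length x) (length y)` with `x↾n = y↾n` and
`x(n) < y(n)`. -/
def thetaLt (x y : List Ordinal) : Prop :=
  (y <+: x ∧ y ≠ x) ∨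
    ∃ (n : ℕ) (hx : n < x.length) (hy : n < y.length),
      x.take n = y.take n ∧ x.get ⟨n, hx⟩ < y.get ⟨n, hy⟩

/-- The strict order of `θ_γ`. -/
def thetaRel (γ : Ordinal) : ThetaCarrier γ → ThetaCarrier γ → Prop :=
  fun a b => thetaLt a.1 b.1

/-- The product `ρ × θ` of linear orders, ordered by last differences:
`(x, y) < (x', y')` iff `y < y'`, or `y = y'` and `x < x'`. -/
def lastDiffRel {A B : Type*} (r : A → A → Prop) (s : B → B → Prop) :
    A × B → A × B → Prop :=
  fun p q => s p.2 q.2 ∨ (p.2 = q.2 ∧ r p.1 q.1)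

theorem thetaLt_nil_left (y : List Ordinal) : ¬ thetaLt [] y := by
  rintro (⟨h, h'⟩ | ⟨n, hx, _⟩)
  · exact h' (List.prefix_nil.1 h)
  · simp at hx

theorem thetaLt_cons_nil (a : Ordinal) (x : List Ordinal) : thetaLt (a :: x) [] :=
  Or.inl ⟨List.nil_prefix, by simp⟩

theorem thetaLt_cons_cons (a b : Ordinal) (x y : List Ordinal) :
    thetaLt (a :: x) (b :: y) ↔ a < b ∨ (a = b ∧ thetaLt x y) := by
  constructor
  · rintro (⟨h, h'⟩ | ⟨n, hx, hy, h1, h2⟩)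
    · rw [List.cons_prefix_cons] at h
      obtain ⟨rfl, h⟩ := h
      exact Or.inr ⟨rfl, Or.inl ⟨h, fun e => h' (by rw [e])⟩⟩
    · cases n with
      | zero => exact Or.inl (by simpa using h2)
      | succ n =>
        simp only [List.take_succ_cons, List.cons.injEq] at h1
        refine Or.inr ⟨h1.1, Or.inr ⟨n, by simpa using hx, by simpa using hy, h1.2, ?_⟩⟩
        simpa using h2
  · rintro (h | ⟨rfl, ⟨h, h'⟩ | ⟨n, hx, hy, h1, h2⟩⟩)
    · exact Or.inr ⟨0, by simp, by simp, by simp, by simpa using h⟩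
    · exact Or.inl ⟨by simpa using h, by simpa using h'⟩
    · exact Or.inr ⟨n + 1, by simpa using hx, by simpa using hy, by simpa using h1,
        by simpa using h2⟩

/-- Underlying map: block `i < α` goes below `i`, block `α` is shifted by `α`. -/
noncomputable def thetaFun (α : Ordinal) (x : List Ordinal) (i : Ordinal) : List Ordinal :=
  if i < α then i :: x else
    match x with
    | [] => []
    | j :: t => (α + j) :: t

theorem thetaFun_lt {α i : Ordinal} (x : List Ordinal) (h : i < α) :
    thetaFun α x i = i :: x := by simp [thetaFun, h]

theorem thetaFun_nil (α : Ordinal) : thetaFun α [] α = [] := by simp [thetaFun]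

theorem thetaFun_cons (α j : Ordinal) (t : List Ordinal) :
    thetaFun α (j :: t) α = (α + j) :: t := by simp [thetaFun]

/-- Lemma 2.10(i): if `γ` is closed under ordinal addition and is not a cardinal,
and `α < γ`, then `θ_γ` is order isomorphic to `θ_γ × (α + 1)`. -/
theorem theta_iso_theta_mul_succ (γ : Ordinal)
    (hγ : ∀ δ < γ, ∀ δ' < γ, δ + δ' < γ)
    (hγcard : γ.card.ord ≠ γ)
    (α : Ordinal) (hα : α < γ) :
    Nonempty
      (thetaRel γ ≃r
        lastDiffRel (thetaRel γ)
          (fun a b : {o : Ordinal // o < α + 1} => a.1 < b.1)) := by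
  have hle : ∀ p : {o : Ordinal // o < α + 1}, p.1 < α ∨ p.1 = α := fun p =>
    lt_or_eq_of_le (Order.lt_add_one_iff.1 p.2)
  have hmem : ∀ p : ThetaCarrier γ × {o : Ordinal // o < α + 1},
      ∀ o ∈ thetaFun α p.1.1 p.2.1, o < γ := by
    rintro ⟨⟨x, hx⟩, i⟩ o ho
    rcases hle i with h | h
    · simp only [thetaFun_lt _ h, List.mem_cons] at ho
      rcases ho with rfl | ho
      · exact h.trans hα
      · exact hx _ ho
    · simp only [h] at ho
      cases x with
      | nil => simp [thetaFun_nil] at ho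
      | cons j t =>
        simp only [thetaFun_cons, List.mem_cons] at ho
        rcases ho with rfl | ho
        · exact hγ _ hα _ (hx _ (by simp))
        · exact hx _ (by simp [ho])
  let f : ThetaCarrier γ × {o : Ordinal // o < α + 1} → ThetaCarrier γ :=
    fun p => ⟨thetaFun α p.1.1 p.2.1, hmem p⟩
  have hinj : Function.Injective f := by
    rintro ⟨⟨x, hx⟩, ⟨i, hi⟩⟩ ⟨⟨y, hy⟩, ⟨k, hk⟩⟩ h
    have h : thetaFun α x i = thetaFun α y k := congrArg Subtype.val h
    suffices x = y ∧ i = k by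
      obtain ⟨rfl, rfl⟩ := this
      rfl
    rcases hle ⟨i, hi⟩ with h1 | h1 <;> rcases hle ⟨k, hk⟩ with h2 | h2 <;> dsimp only at h1 h2
    · rw [thetaFun_lt _ h1, thetaFun_lt _ h2, List.cons.injEq] at h
      exact ⟨h.2, h.1⟩
    · subst h2
      rw [thetaFun_lt _ h1] at h
      cases y with
      | nil => simp [thetaFun_nil] at h
      | cons j t =>
        rw [thetaFun_cons, List.cons.injEq] at h
        exact absurd (h.1 ▸ h1) (not_lt.2 le_self_add)
    · subst h1
      rw [thetaFun_lt _ h2] at h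
      cases x with
      | nil => simp [thetaFun_nil] at h
      | cons j t =>
        rw [thetaFun_cons, List.cons.injEq] at h
        exact absurd (h.1.symm ▸ h2) (not_lt.2 le_self_add)
    · subst h1
      subst h2
      refine ⟨?_, rfl⟩
      cases x <;> cases y <;> simp_all [thetaFun_nil, thetaFun_cons]
  have hsurj : Function.Surjective f := by
    rintro ⟨x, hx⟩
    have hα1 : α < α + 1 := Order.lt_add_one_iff.2 le_rfl
    cases x with
    | nil => exact ⟨⟨⟨[], by simp⟩, ⟨α, hα1⟩⟩, Subtype.ext (thetaFun_nil α)⟩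
    | cons k t =>
      have ht : ∀ o ∈ t, o < γ := fun o ho => hx o (by simp [ho])
      rcases lt_or_ge k α with h | h
      · exact ⟨⟨⟨t, ht⟩, ⟨k, h.trans hα1⟩⟩, Subtype.ext (thetaFun_lt t h)⟩
      · have hk : k - α < γ := (Ordinal.sub_le_self k α).trans_lt (hx k (by simp))
        refine ⟨⟨⟨(k - α) :: t, ?_⟩, ⟨α, hα1⟩⟩, Subtype.ext ?_⟩
        · intro o ho
          rcases List.mem_cons.1 ho with rfl | ho
          · exact hk
          · exact ht _ ho
        · refine (thetaFun_cons α (k - α) t).trans ?_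
          rw [Ordinal.add_sub_cancel_of_le h]
  refine ⟨RelIso.symm ⟨Equiv.ofBijective f ⟨hinj, hsurj⟩, ?_⟩⟩
  rintro ⟨⟨x, hx⟩, ⟨i, hi⟩⟩ ⟨⟨y, hy⟩, ⟨k, hk⟩⟩
  change thetaLt (thetaFun α x i) (thetaFun α y k) ↔
    i < k ∨ ((⟨i, hi⟩ : {o : Ordinal // o < α + 1}) = ⟨k, hk⟩ ∧ thetaLt x y)
  rw [Subtype.mk.injEq]
  rcases hle ⟨i, hi⟩ with h1 | h1 <;> rcases hle ⟨k, hk⟩ with h2 | h2 <;> dsimp only at h1 h2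
  · rw [thetaFun_lt _ h1, thetaFun_lt _ h2, thetaLt_cons_cons]
  · subst h2
    rw [thetaFun_lt _ h1]
    refine iff_of_true ?_ (Or.inl h1)
    cases y with
    | nil => rw [thetaFun_nil]; exact thetaLt_cons_nil _ _
    | cons j t =>
      rw [thetaFun_cons, thetaLt_cons_cons]
      exact Or.inl (h1.trans_le le_self_add)
  · subst h1
    rw [thetaFun_lt _ h2]
    refine iff_of_false ?_ ?_
    · cases x with
      | nil => rw [thetaFun_nil]; exact thetaLt_nil_left _
      | cons j t =>
        rw [thetaFun_cons, thetaLt_cons_cons]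
        have h3 : k < i + j := h2.trans_le le_self_add
        rintro (h | h)
        · exact lt_asymm h h3
        · exact h3.ne' h.1
    · rintro (h | h)
      · exact lt_asymm h h2
      · exact h2.ne' h.1
  · subst h1
    subst h2
    cases x <;> cases y <;>
      simp [thetaFun_nil, thetaFun_cons, thetaLt_cons_cons, thetaLt_nil_left, thetaLt_cons_nil]
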